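/- arXiv:2406.16287 — 2 statements merged into one kernel-verified Lean document; each statement's English description precedes it below -/
import Mathlib

section
/- Fix integers M ≥ 1, N ≥ 1, reals ε > 0, L > 0 and a < b with τ := b − a < ε/L, a function f : ℝ → ℝ that is Lipschitz continuous with constant L, and a real polynomial u₀ of degree at most M with u₀(−1) = u₀(1) = 0. Then there exists exactly one h ∈ V_{M,N} with h(x,a) = u₀(x) for all x ∈ [−1,1] solving the implicit ESET scheme on [a,b]: ∫_a^b ∫₋₁¹ [∂_t h·w + ε ∂_x h·∂_x w + (1/ε) f(h)·w] dx dt = 0 for every w ∈ W_{M,N−1}. -/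
/-!
Take `w = ∂ₜh` as the unknown: `h = u₀ + J w`, where `J` is integration in time from `a`, and `w`
ranges over the test space itself, normed by `L²` of the slab `[-1, 1] × [a, b]`. The scheme reads
`A w = Φ w` in the dual of the test space, with
`A w v = ⟨w, v⟩ + ε ⟨J ∂ₓw, ∂ₓv⟩` and `Φ w v = -ε ⟨u₀', ∂ₓv⟩ - ε⁻¹ ⟨f (u₀ + J w), v⟩`.
Since `∫ (J g) g = (J g)(b)² / 2 ≥ 0` for each `x`, the form `A` is coercive with constant `1`.
Since `‖J w‖ ≤ (b - a) ‖w‖`, the map `Φ` is Lipschitz with constant `(L / ε) (b - a)`.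
Hence `A⁻¹ ∘ Φ` is a contraction under the step restriction `b - a < ε / L`, and the
solution is its Banach fixed point.
-/

open MeasureTheory intervalIntegral

/-- `h(x,t)` is a real polynomial function of degree at most `M` in `x` and
at most `N` in `t`. -/
def IsPolyMN (M N : ℕ) (h : ℝ → ℝ → ℝ) : Prop :=
  ∃ c : Fin (M + 1) → Fin (N + 1) → ℝ,
    ∀ x t : ℝ, h x t = ∑ i : Fin (M + 1), ∑ j : Fin (N + 1),
      c i j * x ^ (i : ℕ) * t ^ (j : ℕ)

/-- The trial space `V_{M,N}`: polynomial functions of degree at most `M` in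
`x` and at most `N` in `t`, vanishing at `x = ±1`. -/
def MemV (M N : ℕ) (h : ℝ → ℝ → ℝ) : Prop :=
  IsPolyMN M N h ∧ ∀ t : ℝ, h (-1) t = 0 ∧ h 1 t = 0

/-- The test space `W_{M,N−1}`: polynomial functions of degree at most `M` in
`x` and at most `N−1` in `t`, vanishing at `x = ±1`. -/
def MemW (M N : ℕ) (w : ℝ → ℝ → ℝ) : Prop :=
  IsPolyMN M (N - 1) w ∧ ∀ t : ℝ, w (-1) t = 0 ∧ w 1 t = 0

/-- Partial derivative in time. -/
noncomputable def ptd (h : ℝ → ℝ → ℝ) (x t : ℝ) : ℝ := deriv (fun s => h x s) t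

/-- Partial derivative in space. -/
noncomputable def pxd (h : ℝ → ℝ → ℝ) (x t : ℝ) : ℝ := deriv (fun y => h y t) x

open scoped NNReal

theorem existsUnique_eq_of_coercive_of_lipschitz {E : Type*} [NormedAddCommGroup E]
    [NormedSpace ℝ E] [FiniteDimensional ℝ E] {A : E →ₗ[ℝ] Module.Dual ℝ E}
    {Φ : E → Module.Dual ℝ E} {α κ : ℝ≥0} (hκα : κ < α) (hA : ∀ u, α * ‖u‖ ^ 2 ≤ A u u)
    (hΦ : ∀ u v w, Φ u w - Φ v w ≤ κ * ‖u - v‖ * ‖w‖) : ∃! u, A u = Φ u := by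
  have : CompleteSpace E := FiniteDimensional.complete ℝ E
  have hα : 0 < (α : ℝ) := κ.coe_nonneg.trans_lt hκα
  have hinj : Function.Injective A := (injective_iff_map_eq_zero A).2 fun u hu ↦ by
    have h := hA u
    rw [hu, LinearMap.zero_apply] at h
    exact norm_eq_zero.1 (pow_eq_zero_iff two_ne_zero |>.1
      (le_antisymm (nonpos_of_mul_nonpos_right h hα) (sq_nonneg _)))
  let e : E ≃ₗ[ℝ] Module.Dual ℝ E := A.linearEquivOfInjective hinj Subspace.dual_finrank_eq.symm
  have he : ∀ ℓ, A (e.symm ℓ) = ℓ := e.apply_symm_apply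
  have hT : ContractingWith (κ / α) (fun u ↦ e.symm (Φ u)) := by
    refine ⟨(div_lt_one hα).2 hκα, LipschitzWith.of_dist_le_mul fun u v ↦ ?_⟩
    rw [dist_eq_norm, dist_eq_norm, NNReal.coe_div, div_mul_eq_mul_div, le_div_iff₀' hα]
    set w := e.symm (Φ u) - e.symm (Φ v) with hw
    have hAw : A w = Φ u - Φ v := by rw [hw, map_sub, he, he]
    have hle : α * ‖w‖ ^ 2 ≤ κ * ‖u - v‖ * ‖w‖ :=
      calc α * ‖w‖ ^ 2 ≤ A w w := hA w
        _ = Φ u w - Φ v w := by rw [hAw, LinearMap.sub_apply]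
        _ ≤ κ * ‖u - v‖ * ‖w‖ := hΦ u v w
    rcases (norm_nonneg w).eq_or_lt with h | h
    · rw [← h, mul_zero]
      positivity
    · exact le_of_mul_le_mul_right (by linarith) h
  have hfix : ∀ u, A u = Φ u ↔ Function.IsFixedPt (fun u ↦ e.symm (Φ u)) u := fun u ↦
    eq_comm.trans e.symm_apply_eq.symm
  simp only [hfix]
  exact ⟨_, hT.fixedPoint_isFixedPt, fun _ ↦ hT.fixedPoint_unique⟩

/-- The inner product structure given by a positive definite bilinear form; it supplies the norm
of a Galerkin space. -/
abbrev innerCoreOfForm {V : Type*} [AddCommGroup V] [Module ℝ V] (G : LinearMap.BilinForm ℝ V)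
    (hG : G.IsPosSemidef) (hdef : ∀ v, G v v = 0 → v = 0) : InnerProductSpace.Core ℝ V where
  inner v w := G v w
  conj_inner_symm v w := hG.isSymm.eq w v
  re_inner_nonneg v := hG.isNonneg.nonneg v
  add_left u v w := by rw [map_add, LinearMap.add_apply]
  smul_left v w r := by rw [map_smul, LinearMap.smul_apply]; rfl
  definite := hdef

theorem existsUnique_eq_of_form_le_of_lipschitz {V : Type*} [AddCommGroup V] [Module ℝ V]
    [FiniteDimensional ℝ V] {G : LinearMap.BilinForm ℝ V} (hG : G.IsPosSemidef)
    (hdef : ∀ v, G v v = 0 → v = 0) {A : V →ₗ[ℝ] Module.Dual ℝ V} {Φ : V → Module.Dual ℝ V}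
    {κ : ℝ≥0} (hκ : κ < 1) (hA : ∀ v, G v v ≤ A v v)
    (hΦ : ∀ u v w, Φ u w - Φ v w ≤ κ * √(G (u - v) (u - v)) * √(G w w)) :
    ∃! u, A u = Φ u := by
  let _ : NormedAddCommGroup V := (innerCoreOfForm G hG hdef).toNormedAddCommGroup
  let _ : InnerProductSpace ℝ V := .ofCore (innerCoreOfForm G hG hdef).toCore
  have hnorm (v : V) : √(G v v) = ‖v‖ := (norm_eq_sqrt_real_inner v).symm
  simp only [hnorm] at hΦ
  refine existsUnique_eq_of_coercive_of_lipschitz hκ (fun v ↦ ?_) hΦ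
  rw [NNReal.coe_one, one_mul, ← hnorm, Real.sq_sqrt (hG.nonneg v)]
  exact hA v

section L2Form

variable {X : Type*} [TopologicalSpace X] [T2Space X] [MeasurableSpace X]
  [OpensMeasurableSpace X] {μ : Measure X} [IsFiniteMeasureOnCompacts μ] {K : Set X}

/-- The `L²(K, μ)` inner product, as a bilinear form on the continuous functions. -/
noncomputable def l2Form (μ : Measure X) [IsFiniteMeasureOnCompacts μ] (hK : IsCompact K) :
    LinearMap.BilinForm ℝ C(X, ℝ) :=
  have hint (φ ψ : C(X, ℝ)) : IntegrableOn (fun z ↦ φ z * ψ z) K μ :=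
    (φ * ψ).continuous.continuousOn.integrableOn_compact hK
  LinearMap.mk₂ ℝ (fun φ ψ ↦ ∫ z in K, φ z * ψ z ∂μ)
    (fun φ₁ φ₂ ψ ↦ by
      simp only [ContinuousMap.add_apply, add_mul, integral_add (hint φ₁ ψ) (hint φ₂ ψ)])
    (fun r φ ψ ↦ by
      simp only [ContinuousMap.smul_apply, smul_eq_mul, mul_assoc,
        MeasureTheory.integral_const_mul])
    (fun φ ψ₁ ψ₂ ↦ by
      simp only [ContinuousMap.add_apply, mul_add, integral_add (hint φ ψ₁) (hint φ ψ₂)])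
    (fun r φ ψ ↦ by
      simp only [ContinuousMap.smul_apply, smul_eq_mul, mul_left_comm _ r,
        MeasureTheory.integral_const_mul])

theorem l2Form_apply (hK : IsCompact K) (φ ψ : C(X, ℝ)) :
    l2Form μ hK φ ψ = ∫ z in K, φ z * ψ z ∂μ := rfl

theorem l2Form_mul_one (hK : IsCompact K) (φ ψ : C(X, ℝ)) :
    l2Form μ hK (φ * ψ) 1 = l2Form μ hK φ ψ := by
  simp only [l2Form_apply, ContinuousMap.mul_apply, ContinuousMap.one_apply, mul_one]

theorem l2Form_isPosSemidef (hK : IsCompact K) : (l2Form μ hK).IsPosSemidef where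
  eq φ ψ := by simp only [l2Form_apply, mul_comm]
  nonneg φ := integral_nonneg fun z ↦ mul_self_nonneg (φ z)

theorem l2Form_sq_le (hK : IsCompact K) (φ ψ : C(X, ℝ)) :
    l2Form μ hK φ ψ ^ 2 ≤ l2Form μ hK φ φ * l2Form μ hK ψ ψ :=
  LinearMap.BilinForm.apply_sq_le_of_symm _ (l2Form_isPosSemidef hK).nonneg
    (LinearMap.BilinForm.isSymm_iff.1 (l2Form_isPosSemidef hK).isSymm) φ ψ

theorem l2Form_self_mono (hK : IsCompact K) {φ ψ : C(X, ℝ)} (h : ∀ z, |φ z| ≤ |ψ z|) :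
    l2Form μ hK φ φ ≤ l2Form μ hK ψ ψ :=
  setIntegral_mono ((φ * φ).continuous.continuousOn.integrableOn_compact hK)
    ((ψ * ψ).continuous.continuousOn.integrableOn_compact hK) fun z ↦ by
      simpa only [sq] using sq_le_sq.2 (h z)

theorem eqOn_zero_interior_of_l2Form_self_eq_zero [μ.IsOpenPosMeasure] (hK : IsCompact K)
    {φ : C(X, ℝ)} (h : l2Form μ hK φ φ = 0) : Set.EqOn φ 0 (interior K) := by
  rw [l2Form_apply, integral_eq_zero_iff_of_nonneg (fun z ↦ mul_self_nonneg (φ z))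
    ((φ * φ).continuous.continuousOn.integrableOn_compact hK)] at h
  refine Measure.eqOn_open_of_ae_eq (μ := μ) ?_ isOpen_interior φ.continuous.continuousOn
    continuousOn_const
  filter_upwards [ae_restrict_of_ae_restrict_of_subset interior_subset h] with z hz
  exact mul_self_eq_zero.1 hz

end L2Form

section Primitive

variable {g : ℝ → ℝ} {a b : ℝ}

theorem sq_integral_le_mul_integral_sq (hg : Continuous g) (hab : a ≤ b) :
    (∫ s in a..b, g s) ^ 2 ≤ (b - a) * ∫ s in a..b, g s ^ 2 := by
  have h := l2Form_sq_le (μ := volume) (isCompact_Icc : IsCompact (Set.Icc a b)) 1 ⟨g, hg⟩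
  simpa [l2Form_apply, integral_Icc_eq_integral_Ioc, ← integral_of_le hab, ← sq, hab] using h

theorem integral_sq_primitive_le (hg : Continuous g) (hab : a ≤ b) :
    ∫ t in a..b, (∫ s in a..t, g s) ^ 2 ≤ (b - a) ^ 2 * ∫ t in a..b, g t ^ 2 := by
  have hbound : ∀ t ∈ Set.Icc a b,
      (∫ s in a..t, g s) ^ 2 ≤ (b - a) * ∫ s in a..b, g s ^ 2 := fun t ht ↦
    calc (∫ s in a..t, g s) ^ 2 ≤ (t - a) * ∫ s in a..t, g s ^ 2 :=
          sq_integral_le_mul_integral_sq hg ht.1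
      _ ≤ (b - a) * ∫ s in a..b, g s ^ 2 := by
          gcongr
          · exact intervalIntegral.integral_nonneg ht.1 fun s _ ↦ sq_nonneg _
          · exact ht.2
          · exact integral_mono_interval le_rfl ht.1 ht.2 (ae_of_all _ fun s ↦ sq_nonneg _)
              ((hg.pow 2).intervalIntegrable _ _)
  have hprim : Continuous fun t ↦ ∫ s in a..t, g s :=
    continuous_primitive (fun _ _ ↦ hg.intervalIntegrable _ _) a
  calc ∫ t in a..b, (∫ s in a..t, g s) ^ 2
      ≤ ∫ _ in a..b, (b - a) * ∫ s in a..b, g s ^ 2 :=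
        integral_mono_on hab ((hprim.pow 2).intervalIntegrable _ _) intervalIntegrable_const hbound
    _ = (b - a) ^ 2 * ∫ t in a..b, g t ^ 2 := by
        rw [intervalIntegral.integral_const, smul_eq_mul, sq, mul_assoc]

theorem integral_primitive_mul_self_nonneg (hg : Continuous g) (a b : ℝ) :
    0 ≤ ∫ t in a..b, (∫ s in a..t, g s) * g t := by
  have hderiv : ∀ t, HasDerivAt (fun t ↦ (∫ s in a..t, g s) ^ 2 / 2)
      ((∫ s in a..t, g s) * g t) t := fun t ↦
    (((hg.integral_hasStrictDerivAt a t).hasDerivAt.pow 2).div_const 2).congr_deriv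
      (by norm_num; ring)
  have hprim : Continuous fun t ↦ ∫ s in a..t, g s :=
    continuous_primitive (fun _ _ ↦ hg.intervalIntegrable _ _) a
  rw [integral_eq_sub_of_hasDerivAt (fun t _ ↦ hderiv t)
    ((hprim.mul hg).intervalIntegrable _ _), integral_same]
  nlinarith [sq_nonneg (∫ s in a..b, g s)]

end Primitive

section TimePrimitive

variable {X : Type*} [TopologicalSpace X]

/-- Integration from time `a` in the second variable, acting on continuous functions. -/
noncomputable def timePrimitive (a : ℝ) : C(X × ℝ, ℝ) →ₗ[ℝ] C(X × ℝ, ℝ) :=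
  have hint (φ : C(X × ℝ, ℝ)) (x : X) (t : ℝ) :
      IntervalIntegrable (fun s ↦ φ (x, s)) volume a t :=
    (φ.continuous.comp (Continuous.prodMk_right x)).intervalIntegrable _ _
  { toFun φ := ⟨fun z ↦ ∫ s in a..z.2, φ (z.1, s), by
        exact continuous_parametric_intervalIntegral_of_continuous (μ := volume)
          (f := fun z s ↦ φ (z.1, s)) (φ.continuous.comp (by fun_prop)) continuous_snd⟩
    map_add' φ ψ := by
      ext z
      exact intervalIntegral.integral_add (hint φ z.1 z.2) (hint ψ z.1 z.2)
    map_smul' r φ := by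
      ext z
      exact intervalIntegral.integral_const_mul r _ }

theorem timePrimitive_apply (a : ℝ) (φ : C(X × ℝ, ℝ)) (x : X) (t : ℝ) :
    timePrimitive a φ (x, t) = ∫ s in a..t, φ (x, s) := rfl

variable [T2Space X] [MeasurableSpace X] [OpensMeasurableSpace X]
  {μ : Measure X} [IsFiniteMeasureOnCompacts μ] [SFinite μ] {K : Set X} {a b : ℝ}

/-- The `L²` inner product of the space-time slab `K × [a, b]`. -/
noncomputable abbrev slabForm (μ : Measure X) [IsFiniteMeasureOnCompacts μ]
    (hK : IsCompact K) (a b : ℝ) : LinearMap.BilinForm ℝ C(X × ℝ, ℝ) :=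
  l2Form (μ.prod volume) (hK.prod (isCompact_Icc : IsCompact (Set.Icc a b)))

theorem slabForm_eq_integral_integral (hK : IsCompact K) (hab : a ≤ b) (φ ψ : C(X × ℝ, ℝ)) :
    slabForm μ hK a b φ ψ = ∫ x in K, (∫ t in a..b, φ (x, t) * ψ (x, t)) ∂μ := by
  rw [l2Form_apply, setIntegral_prod (fun z ↦ φ z * ψ z)
    ((φ * ψ).continuous.continuousOn.integrableOn_compact (hK.prod isCompact_Icc))]
  simp only [integral_of_le hab, integral_Icc_eq_integral_Ioc]

theorem slabForm_timePrimitive_self_le (hK : IsCompact K) (hab : a ≤ b) (φ : C(X × ℝ, ℝ)) :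
    slabForm μ hK a b (timePrimitive a φ) (timePrimitive a φ) ≤
      (b - a) ^ 2 * slabForm μ hK a b φ φ := by
  have hint (ψ : C(X × ℝ, ℝ)) : IntegrableOn (fun x ↦ ∫ t in a..b, ψ (x, t)) K μ :=
    (continuous_parametric_intervalIntegral_of_continuous' (f := fun x t ↦ ψ (x, t))
      ψ.continuous a b).continuousOn.integrableOn_compact hK
  rw [slabForm_eq_integral_integral hK hab, slabForm_eq_integral_integral hK hab,
    ← MeasureTheory.integral_const_mul]
  refine setIntegral_mono (hint (timePrimitive a φ * timePrimitive a φ))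
    ((hint (φ * φ)).const_mul _) fun x ↦ ?_
  simpa only [timePrimitive_apply, ContinuousMap.mul_apply, ← sq, Function.comp_apply] using
    integral_sq_primitive_le (φ.continuous.comp (Continuous.prodMk_right x)) hab

theorem slabForm_timePrimitive_nonneg (hK : IsCompact K) (hab : a ≤ b) (φ : C(X × ℝ, ℝ)) :
    0 ≤ slabForm μ hK a b (timePrimitive a φ) φ := by
  rw [slabForm_eq_integral_integral hK hab]
  exact integral_nonneg fun x ↦
    integral_primitive_mul_self_nonneg (φ.continuous.comp (Continuous.prodMk_right x)) a b

theorem slabForm_comp_sub_le (hK : IsCompact K) (hab : a ≤ b) {F : C(ℝ, ℝ)} {κ : ℝ≥0}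
    (hF : LipschitzWith κ F) (g φ₁ φ₂ ψ : C(X × ℝ, ℝ)) :
    |slabForm μ hK a b (F.comp (g + timePrimitive a φ₁)) ψ -
        slabForm μ hK a b (F.comp (g + timePrimitive a φ₂)) ψ| ≤
      κ * (b - a) * √(slabForm μ hK a b (φ₁ - φ₂) (φ₁ - φ₂)) * √(slabForm μ hK a b ψ ψ) := by
  set P := slabForm μ hK a b
  set δ := F.comp (g + timePrimitive a φ₁) - F.comp (g + timePrimitive a φ₂) with hδ
  have hδ_le : ∀ z, |δ z| ≤ |(κ • timePrimitive a (φ₁ - φ₂)) z| := fun z ↦ by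
    have h := hF.dist_le_mul (g z + timePrimitive a φ₁ z) (g z + timePrimitive a φ₂ z)
    rw [Real.dist_eq, Real.dist_eq, add_sub_add_left_eq_sub] at h
    simpa [hδ, NNReal.smul_def, abs_mul] using h
  have hδδ : P δ δ ≤ (κ * (b - a)) ^ 2 * P (φ₁ - φ₂) (φ₁ - φ₂) :=
    calc P δ δ ≤ P (κ • timePrimitive a (φ₁ - φ₂)) (κ • timePrimitive a (φ₁ - φ₂)) :=
          l2Form_self_mono _ hδ_le
      _ = κ ^ 2 * P (timePrimitive a (φ₁ - φ₂)) (timePrimitive a (φ₁ - φ₂)) := by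
          simp only [NNReal.smul_def, map_smul, LinearMap.smul_apply, smul_eq_mul, sq, mul_assoc]
      _ ≤ κ ^ 2 * ((b - a) ^ 2 * P (φ₁ - φ₂) (φ₁ - φ₂)) := by
          gcongr
          exact slabForm_timePrimitive_self_le hK hab _
      _ = (κ * (b - a)) ^ 2 * P (φ₁ - φ₂) (φ₁ - φ₂) := by ring
  have hP (φ) : 0 ≤ P φ φ := (l2Form_isPosSemidef _).nonneg φ
  rw [← LinearMap.sub_apply, ← map_sub]
  refine abs_le_of_sq_le_sq ?_ (mul_nonneg (mul_nonneg
    (mul_nonneg κ.coe_nonneg (sub_nonneg.2 hab)) (Real.sqrt_nonneg _)) (Real.sqrt_nonneg _))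
  calc P δ ψ ^ 2 ≤ P δ δ * P ψ ψ := l2Form_sq_le _ δ ψ
    _ ≤ (κ * (b - a)) ^ 2 * P (φ₁ - φ₂) (φ₁ - φ₂) * P ψ ψ := by
        gcongr
        exact hP ψ
    _ = (κ * (b - a) * √(P (φ₁ - φ₂) (φ₁ - φ₂)) * √(P ψ ψ)) ^ 2 := by
        rw [mul_pow _ √(P ψ ψ), mul_pow _ √(P _ _), Real.sq_sqrt (hP _), Real.sq_sqrt (hP _)]

theorem existsUnique_galerkin {V : Type*} [AddCommGroup V] [Module ℝ V] [FiniteDimensional ℝ V]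
    (hK : IsCompact K) (hab : a ≤ b) {ι D : V →ₗ[ℝ] C(X × ℝ, ℝ)}
    (hι : ∀ v, slabForm μ hK a b (ι v) (ι v) = 0 → v = 0) {ν : ℝ} (hν : 0 ≤ ν)
    {F : C(ℝ, ℝ)} {κ : ℝ≥0} (hF : LipschitzWith κ F) (hκ : κ * (b - a) < 1)
    (g g' : C(X × ℝ, ℝ)) :
    ∃! w, ∀ v, slabForm μ hK a b (ι w) (ι v) +
      ν * slabForm μ hK a b (g' + timePrimitive a (D w)) (D v) +
      slabForm μ hK a b (F.comp (g + timePrimitive a (ι w))) (ι v) = 0 := by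
  set P := slabForm μ hK a b
  set J : C(X × ℝ, ℝ) →ₗ[ℝ] C(X × ℝ, ℝ) := timePrimitive a
  have hP : P.IsPosSemidef := l2Form_isPosSemidef _
  have hG : LinearMap.BilinForm.IsPosSemidef (P.compl₁₂ ι ι) :=
    { eq := fun v w ↦ hP.isSymm.eq (ι v) (ι w)
      nonneg := fun v ↦ hP.nonneg (ι v) }
  let A : V →ₗ[ℝ] Module.Dual ℝ V := P.compl₁₂ ι ι + ν • P.compl₁₂ (J ∘ₗ D) D
  let Φ (w : V) : Module.Dual ℝ V := -(ν • P g' ∘ₗ D + P (F.comp (g + J (ι w))) ∘ₗ ι)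
  have hA (v : V) : P (ι v) (ι v) ≤ A v v :=
    le_add_of_nonneg_right (mul_nonneg hν (slabForm_timePrimitive_nonneg hK hab _))
  have hΦ (w₁ w₂ v : V) : Φ w₁ v - Φ w₂ v ≤
      κ * (b - a) * √(P (ι (w₁ - w₂)) (ι (w₁ - w₂))) * √(P (ι v) (ι v)) :=
    calc Φ w₁ v - Φ w₂ v
        = -(P (F.comp (g + J (ι w₁))) (ι v) - P (F.comp (g + J (ι w₂))) (ι v)) := by
          simp only [Φ, LinearMap.neg_apply, LinearMap.add_apply, LinearMap.comp_apply]
          ring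
      _ ≤ _ := by
          rw [map_sub]
          exact (neg_le_abs _).trans (slabForm_comp_sub_le hK hab hF g (ι w₁) (ι w₂) (ι v))
  have hiff (w : V) : A w = Φ w ↔ ∀ v, P (ι w) (ι v) + ν * P (g' + J (D w)) (D v) +
      P (F.comp (g + J (ι w))) (ι v) = 0 := by
    rw [LinearMap.ext_iff]
    refine forall_congr' fun v ↦ ?_
    simp only [A, Φ, LinearMap.add_apply, LinearMap.smul_apply, LinearMap.neg_apply,
      LinearMap.compl₁₂_apply, LinearMap.comp_apply, smul_eq_mul, map_add]
    rw [eq_neg_iff_add_eq_zero]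
    ring_nf
  simpa only [hiff] using existsUnique_eq_of_form_le_of_lipschitz hG hι
    (κ := ⟨κ * (b - a), mul_nonneg κ.coe_nonneg (sub_nonneg.2 hab)⟩) hκ hA hΦ

end TimePrimitive

section Fubini

theorem slabForm_eq_integral_integral_swap {a b c d : ℝ} (hab : a ≤ b) (hcd : c ≤ d)
    (φ ψ : C(ℝ × ℝ, ℝ)) :
    slabForm volume (isCompact_Icc : IsCompact (Set.Icc c d)) a b φ ψ =
      ∫ t in a..b, ∫ x in c..d, φ (x, t) * ψ (x, t) := by
  rw [l2Form_apply, ← setIntegral_prod_swap, setIntegral_prod]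
  · simp only [integral_of_le hab, integral_of_le hcd, integral_Icc_eq_integral_Ioc,
      Prod.swap_prod_mk]
  · exact ((φ * ψ).continuous.comp continuous_swap).continuousOn.integrableOn_compact
      (isCompact_Icc.prod isCompact_Icc)

theorem hasDerivAt_timePrimitive_fst {φ φ' : C(ℝ × ℝ, ℝ)}
    (h : ∀ x t, HasDerivAt (fun y ↦ φ (y, t)) (φ' (x, t)) x) (a x t : ℝ) :
    HasDerivAt (fun y ↦ timePrimitive a φ (y, t)) (timePrimitive a φ' (x, t)) x := by
  have hslice (ψ : C(ℝ × ℝ, ℝ)) (y : ℝ) : Continuous fun s ↦ ψ (y, s) :=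
    ψ.continuous.comp (Continuous.prodMk_right y)
  obtain ⟨C, hC⟩ := ((isCompact_closedBall x 1).prod
    (isCompact_uIcc (a := a) (b := t))).exists_bound_of_continuousOn φ'.continuous.continuousOn
  exact (hasDerivAt_integral_of_dominated_loc_of_deriv_le (F := fun y s ↦ φ (y, s))
    (F' := fun y s ↦ φ' (y, s)) (bound := fun _ ↦ C) (Metric.closedBall_mem_nhds x one_pos)
    (.of_forall fun y ↦ (hslice φ y).aestronglyMeasurable)
    ((hslice φ x).intervalIntegrable _ _) (hslice φ' x).aestronglyMeasurable
    (ae_of_all _ fun s hs y hy ↦ hC (y, s) ⟨hy, Set.uIoc_subset_uIcc hs⟩)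
    intervalIntegrable_const (ae_of_all _ fun s _ y _ ↦ h y s)).2

theorem hasDerivAt_timePrimitive_snd (φ : C(ℝ × ℝ, ℝ)) (a x t : ℝ) :
    HasDerivAt (fun s ↦ timePrimitive a φ (x, s)) (φ (x, t)) t :=
  ((φ.continuous.comp (Continuous.prodMk_right x)).integral_hasStrictDerivAt a t).hasDerivAt

end Fubini

section Polynomials

variable {M N : ℕ} {φ : C(ℝ × ℝ, ℝ)}

/-- The monomial `x ^ i * t ^ j` as a continuous function on space-time. -/
def xtMonomial (i j : ℕ) : C(ℝ × ℝ, ℝ) := ⟨fun z ↦ z.1 ^ i * z.2 ^ j, by fun_prop⟩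

/-- The polynomial functions of degree at most `M` in `x` and `N` in `t`, uncurried. -/
def polySpace (M N : ℕ) : Submodule ℝ C(ℝ × ℝ, ℝ) :=
  Submodule.span ℝ (Set.range fun p : Fin (M + 1) × Fin (N + 1) ↦ xtMonomial p.1 p.2)

theorem isPolyMN_curry_iff : IsPolyMN M N (Function.curry φ) ↔ φ ∈ polySpace M N := by
  rw [polySpace, Submodule.mem_span_range_iff_exists_fun, IsPolyMN,
    ← (Equiv.curry (Fin (M + 1)) (Fin (N + 1)) ℝ).exists_congr_right]
  refine exists_congr fun c ↦ ?_
  rw [eq_comm, ContinuousMap.ext_iff, Prod.forall]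
  simp [xtMonomial, Fintype.sum_prod_type, mul_assoc, ContinuousMap.sum_apply]

theorem xtMonomial_mem_polySpace {i j : ℕ} (hi : i ≤ M) (hj : j ≤ N) :
    xtMonomial i j ∈ polySpace M N :=
  Submodule.subset_span
    ⟨(⟨i, Nat.lt_succ_of_le hi⟩, ⟨j, Nat.lt_succ_of_le hj⟩), rfl⟩

@[elab_as_elim]
theorem polySpace_induction {p : C(ℝ × ℝ, ℝ) → Prop}
    (monomial : ∀ i ≤ M, ∀ j ≤ N, p (xtMonomial i j)) (add : ∀ φ ψ, p φ → p ψ → p (φ + ψ))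
    (smul : ∀ (r : ℝ) φ, p φ → p (r • φ)) (hφ : φ ∈ polySpace M N) : p φ := by
  refine Submodule.span_induction (p := fun φ _ ↦ p φ) ?_ ?_ (fun φ ψ _ _ ↦ add φ ψ)
    (fun r φ _ ↦ smul r φ) hφ
  · rintro _ ⟨⟨i, j⟩, rfl⟩
    exact monomial i (Nat.le_of_lt_succ i.2) j (Nat.le_of_lt_succ j.2)
  · simpa using smul 0 _ (monomial 0 M.zero_le 0 N.zero_le)

instance : FiniteDimensional ℝ (polySpace M N) :=
  FiniteDimensional.span_of_finite ℝ (Set.finite_range _)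

theorem IsPolyMN.continuous {h : ℝ → ℝ → ℝ} (hh : IsPolyMN M N h) :
    Continuous (Function.uncurry h) := by
  obtain ⟨c, hc⟩ := hh
  simp only [Function.uncurry_def, hc]
  fun_prop

theorem contDiff_of_mem_polySpace (hφ : φ ∈ polySpace M N) {n : WithTop ℕ∞} :
    ContDiff ℝ n φ := by
  refine polySpace_induction (fun i _ j _ ↦ ?_) (fun φ ψ hφ hψ ↦ hφ.add hψ)
    (fun r φ hφ ↦ hφ.const_smul r) hφ
  exact (contDiff_fst.pow i).mul (contDiff_snd.pow j)

theorem eq_of_mem_polySpace_of_eventuallyEq {ψ : C(ℝ × ℝ, ℝ)} {z : ℝ × ℝ}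
    (hφ : φ ∈ polySpace M N) (hψ : ψ ∈ polySpace M N) (h : φ =ᶠ[nhds z] ψ) : φ = ψ :=
  DFunLike.coe_injective <| AnalyticOnNhd.eq_of_eventuallyEq
    (contDiff_omega_iff_analyticOnNhd.1 (contDiff_of_mem_polySpace hφ))
    (contDiff_omega_iff_analyticOnNhd.1 (contDiff_of_mem_polySpace hψ)) h

theorem timePrimitive_mem_polySpace (hφ : φ ∈ polySpace M N) (a : ℝ) :
    timePrimitive a φ ∈ polySpace M (N + 1) := by
  refine polySpace_induction (fun i hi j hj ↦ ?_)
    (fun φ ψ hφ hψ ↦ by rw [map_add]; exact add_mem hφ hψ)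
    (fun r φ hφ ↦ by rw [map_smul]; exact Submodule.smul_mem _ r hφ) hφ
  have h : timePrimitive a (xtMonomial i j) = (j + 1 : ℝ)⁻¹ •
      (xtMonomial i (j + 1) - a ^ (j + 1) • xtMonomial i 0) := by
    ext ⟨x, t⟩
    simp only [timePrimitive_apply, xtMonomial, ContinuousMap.coe_mk, ContinuousMap.smul_apply,
      ContinuousMap.sub_apply, intervalIntegral.integral_const_mul, integral_pow, smul_eq_mul]
    ring
  rw [h]
  exact Submodule.smul_mem _ _ (sub_mem (xtMonomial_mem_polySpace hi (by lia))
    (Submodule.smul_mem _ _ (xtMonomial_mem_polySpace hi (by lia))))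

theorem exists_hasDerivAt_snd_of_mem_polySpace (hφ : φ ∈ polySpace M N) :
    ∃ w ∈ polySpace M (N - 1), ∀ x t, HasDerivAt (fun s ↦ φ (x, s)) (w (x, t)) t := by
  refine polySpace_induction (fun i hi j hj ↦ ?_) ?_ ?_ hφ
  · exact ⟨(j : ℝ) • xtMonomial i (j - 1), Submodule.smul_mem _ _
      (xtMonomial_mem_polySpace hi (Nat.sub_le_sub_right hj 1)), fun x t ↦
      ((hasDerivAt_pow j t).const_mul (x ^ i)).congr_deriv (mul_left_comm _ _ _)⟩
  · rintro φ ψ ⟨v, hv, hφ⟩ ⟨w, hw, hψ⟩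
    exact ⟨v + w, add_mem hv hw, fun x t ↦ (hφ x t).add (hψ x t)⟩
  · rintro r φ ⟨w, hw, hφ⟩
    exact ⟨r • w, Submodule.smul_mem _ r hw, fun x t ↦ (hφ x t).const_smul r⟩

theorem hasDerivAt_pxd (hφ : φ ∈ polySpace M N) (x t : ℝ) :
    HasDerivAt (fun y ↦ φ (y, t)) (pxd (Function.curry φ) x t) x :=
  (((contDiff_of_mem_polySpace hφ (n := 1)).differentiable one_ne_zero).comp
    (by fun_prop : Differentiable ℝ fun y : ℝ ↦ (y, t))).differentiableAt.hasDerivAt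

theorem continuous_uncurry_pxd (hφ : φ ∈ polySpace M N) :
    Continuous (Function.uncurry (pxd (Function.curry φ))) := by
  have hC : ContDiff ℝ 1 φ := contDiff_of_mem_polySpace hφ
  have h (z : ℝ × ℝ) : Function.uncurry (pxd (Function.curry φ)) z = fderiv ℝ φ z (1, 0) :=
    ((hC.differentiable one_ne_zero z).hasFDerivAt.comp_hasDerivAt z.1
      ((hasDerivAt_id z.1).prodMk (hasDerivAt_const z.1 z.2))).deriv
  exact ((hC.continuous_fderiv one_ne_zero).clm_apply continuous_const).congr fun z ↦ (h z).symm

end Polynomials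

section TrialSpace

variable {M N : ℕ} {φ : C(ℝ × ℝ, ℝ)} {a b : ℝ}

/-- The space `V_{M,N}`, uncurried; the test space `W_{M,N-1}` is `dirichletSpace M (N - 1)`. -/
def dirichletSpace (M N : ℕ) : Submodule ℝ C(ℝ × ℝ, ℝ) where
  carrier := {φ | φ ∈ polySpace M N ∧ ∀ t, φ (-1, t) = 0 ∧ φ (1, t) = 0}
  add_mem' := fun hφ hψ ↦ ⟨add_mem hφ.1 hψ.1, fun t ↦ by
    simp [hφ.2 t, hψ.2 t]⟩
  zero_mem' := ⟨zero_mem _, fun _ ↦ ⟨rfl, rfl⟩⟩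
  smul_mem' := fun r _ hφ ↦ ⟨Submodule.smul_mem _ r hφ.1, fun t ↦ by simp [hφ.2 t]⟩

theorem memV_curry_iff : MemV M N (Function.curry φ) ↔ φ ∈ dirichletSpace M N :=
  and_congr_left' isPolyMN_curry_iff

theorem memV_iff {h : ℝ → ℝ → ℝ} :
    MemV M N h ↔ ∃ φ ∈ dirichletSpace M N, h = Function.curry φ := by
  refine ⟨fun hh ↦ ⟨⟨Function.uncurry h, hh.1.continuous⟩, memV_curry_iff.1 hh, rfl⟩, ?_⟩
  rintro ⟨φ, hφ, rfl⟩
  exact memV_curry_iff.2 hφ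

theorem dirichletSpace_le_polySpace : dirichletSpace M N ≤ polySpace M N := fun _ hφ ↦ hφ.1

instance : FiniteDimensional ℝ (dirichletSpace M N) :=
  Submodule.finiteDimensional_of_le dirichletSpace_le_polySpace

/-- The spatial derivative `pxd` as a linear map on `V_{M,N}`. -/
noncomputable def spaceDeriv (M N : ℕ) : dirichletSpace M N →ₗ[ℝ] C(ℝ × ℝ, ℝ) where
  toFun v := ⟨Function.uncurry (pxd (Function.curry v.1)), continuous_uncurry_pxd v.2.1⟩
  map_add' v w := by
    ext ⟨x, t⟩
    exact ((hasDerivAt_pxd v.2.1 x t).add (hasDerivAt_pxd w.2.1 x t)).deriv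
  map_smul' r v := by
    ext ⟨x, t⟩
    exact ((hasDerivAt_pxd v.2.1 x t).const_smul r).deriv

/-- The `L²` inner product of the space-time slab `[-1, 1] × [a, b]` of the scheme. -/
noncomputable abbrev esetForm (a b : ℝ) : LinearMap.BilinForm ℝ C(ℝ × ℝ, ℝ) :=
  slabForm volume (isCompact_Icc : IsCompact (Set.Icc (-1 : ℝ) 1)) a b

theorem eq_zero_of_esetForm_self_eq_zero (hab : a < b) (v : dirichletSpace M N)
    (h : esetForm a b v.1 v.1 = 0) :
    v = 0 := by
  have hmem : (0, (a + b) / 2) ∈ interior (Set.Icc (-1 : ℝ) 1 ×ˢ Set.Icc a b) := by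
    rw [interior_prod_eq, interior_Icc, interior_Icc]
    exact ⟨by norm_num, by constructor <;> linarith⟩
  exact Subtype.ext <| eq_of_mem_polySpace_of_eventuallyEq v.2.1 (zero_mem (polySpace M N)) <|
    (eqOn_zero_interior_of_l2Form_self_eq_zero _ h).eventuallyEq_of_mem
      (isOpen_interior.mem_nhds hmem)

/-- The space-time function with initial value `u₀` at time `a` and time derivative `w`. -/
noncomputable def trialFn (u₀ : Polynomial ℝ) (a : ℝ) (w : C(ℝ × ℝ, ℝ)) : C(ℝ × ℝ, ℝ) :=
  u₀.toContinuousMap.comp ContinuousMap.fst + timePrimitive a w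

theorem trialFn_apply (u₀ : Polynomial ℝ) (a : ℝ) (w : C(ℝ × ℝ, ℝ)) (x t : ℝ) :
    trialFn u₀ a w (x, t) = u₀.eval x + ∫ s in a..t, w (x, s) := rfl

theorem ptd_trialFn (u₀ : Polynomial ℝ) (a : ℝ) (w : C(ℝ × ℝ, ℝ)) (x t : ℝ) :
    ptd (Function.curry (trialFn u₀ a w)) x t = w (x, t) :=
  ((hasDerivAt_timePrimitive_snd w a x t).const_add (u₀.eval x)).deriv

theorem pxd_trialFn (u₀ : Polynomial ℝ) (a : ℝ) (w : dirichletSpace M N) (x t : ℝ) :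
    pxd (Function.curry (trialFn u₀ a w)) x t = trialFn u₀.derivative a (spaceDeriv M N w) (x, t) :=
  ((u₀.hasDerivAt x).add
    (hasDerivAt_timePrimitive_fst (fun x t ↦ hasDerivAt_pxd w.2.1 x t) a x t)).deriv

theorem polynomial_comp_fst_mem_polySpace {u₀ : Polynomial ℝ} (hdeg : u₀.natDegree ≤ M) :
    u₀.toContinuousMap.comp ContinuousMap.fst ∈ polySpace M N := by
  have h : u₀.toContinuousMap.comp ContinuousMap.fst =
      ∑ i ∈ Finset.range (M + 1), u₀.coeff i • xtMonomial i 0 := by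
    ext z
    simp [xtMonomial, Polynomial.eval_eq_sum_range' (Nat.lt_succ_of_le hdeg)]
  rw [h]
  exact Submodule.sum_mem _ fun i hi ↦ Submodule.smul_mem _ _
    (xtMonomial_mem_polySpace (Finset.mem_range_succ_iff.1 hi) N.zero_le)

theorem trialFn_mem_polySpace (hN : 1 ≤ N) {u₀ : Polynomial ℝ} (hdeg : u₀.natDegree ≤ M)
    {w : C(ℝ × ℝ, ℝ)} (hw : w ∈ polySpace M (N - 1)) (a : ℝ) :
    trialFn u₀ a w ∈ polySpace M N := by
  rw [← Nat.sub_add_cancel hN]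
  exact add_mem (polynomial_comp_fst_mem_polySpace hdeg) (timePrimitive_mem_polySpace hw a)

theorem memV_trialFn_iff {u₀ : Polynomial ℝ} (hdeg : u₀.natDegree ≤ M) (hm : u₀.eval (-1) = 0)
    (hp : u₀.eval 1 = 0) (hN : 1 ≤ N) {h : ℝ → ℝ → ℝ} :
    (MemV M N h ∧ ∀ x ∈ Set.Icc (-1 : ℝ) 1, h x a = u₀.eval x) ↔
      ∃ w : dirichletSpace M (N - 1), h = Function.curry (trialFn u₀ a w) := by
  constructor
  · rintro ⟨hh, hinit⟩
    obtain ⟨φ, hφ, rfl⟩ := memV_iff.1 hh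
    obtain ⟨w, hw, hderiv⟩ := exists_hasDerivAt_snd_of_mem_polySpace hφ.1
    have hbdry {x : ℝ} (hx : ∀ t, φ (x, t) = 0) (t : ℝ) : w (x, t) = 0 :=
      (hderiv x t).unique (by simpa only [hx] using hasDerivAt_const t (0 : ℝ))
    have hwD : w ∈ dirichletSpace M (N - 1) :=
      ⟨hw, fun t ↦ ⟨hbdry (fun t ↦ (hφ.2 t).1) t, hbdry (fun t ↦ (hφ.2 t).2) t⟩⟩
    refine ⟨⟨w, hwD⟩, congrArg (fun ψ : C(ℝ × ℝ, ℝ) ↦ Function.curry ψ) ?_⟩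
    refine eq_of_mem_polySpace_of_eventuallyEq (z := (0, a)) hφ.1
      (trialFn_mem_polySpace hN hdeg hw a) ?_
    filter_upwards [(continuous_fst.tendsto (0, a)).eventually
      (Icc_mem_nhds (by norm_num : (-1 : ℝ) < 0) one_pos)] with z hz
    rw [trialFn_apply, integral_eq_sub_of_hasDerivAt (fun t _ ↦ hderiv z.1 t)
      ((w.continuous.comp (Continuous.prodMk_right z.1)).intervalIntegrable _ _)]
    have : φ (z.1, a) = u₀.eval z.1 := hinit z.1 hz
    linarith
  · rintro ⟨⟨w, hw⟩, rfl⟩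
    refine ⟨memV_curry_iff.2 ⟨trialFn_mem_polySpace hN hdeg hw.1 a, fun t ↦ ?_⟩, fun x _ ↦ ?_⟩
    · simp only [trialFn_apply, hw.2, hm, hp, intervalIntegral.integral_zero, add_zero, and_self]
    · simp only [Function.curry, trialFn_apply, integral_same, add_zero]

theorem integral_residual_trialFn (hab : a ≤ b) (u₀ : Polynomial ℝ) (ε : ℝ) (F : C(ℝ, ℝ))
    (w v : dirichletSpace M N) :
    (∫ t in a..b, ∫ x in (-1 : ℝ)..1,
      (ptd (Function.curry (trialFn u₀ a w)) x t * Function.curry v x t +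
        ε * pxd (Function.curry (trialFn u₀ a w)) x t * pxd (Function.curry v) x t +
        F (Function.curry (trialFn u₀ a w) x t) * Function.curry v x t)) =
      esetForm a b w v +
      ε * esetForm a b (trialFn u₀.derivative a (spaceDeriv M N w)) (spaceDeriv M N v) +
      esetForm a b (F.comp (trialFn u₀ a w)) v := by
  let χ : C(ℝ × ℝ, ℝ) := w * v +
    ε • (trialFn u₀.derivative a (spaceDeriv M N w) * spaceDeriv M N v) +
    F.comp (trialFn u₀ a w) * v
  calc _ = esetForm a b χ 1 := by
        rw [slabForm_eq_integral_integral_swap hab (by norm_num)]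
        simp only [ptd_trialFn, pxd_trialFn, mul_assoc, ContinuousMap.one_apply, mul_one]
        rfl
    _ = _ := by
        simp only [χ, map_add, map_smul, LinearMap.add_apply, LinearMap.smul_apply,
          l2Form_mul_one, smul_eq_mul]

end TrialSpace

theorem lipschitzWith_one_div_mul {f : ℝ → ℝ} {ε L : ℝ} (hε : 0 < ε)
    (hf : ∀ x y, |f x - f y| ≤ L * |x - y|) :
    LipschitzWith (L / ε).toNNReal fun u ↦ 1 / ε * f u :=
  LipschitzWith.of_dist_le' fun u v ↦
    calc dist (1 / ε * f u) (1 / ε * f v) = |f u - f v| / ε := by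
          rw [Real.dist_eq, ← mul_sub, abs_mul, abs_of_pos (one_div_pos.2 hε), one_div_mul_eq_div]
      _ ≤ L * |u - v| / ε := by gcongr; exact hf u v
      _ = L / ε * dist u v := mul_div_right_comm _ _ _

/-- Existence and uniqueness part of Theorem 2.1: the implicit ESET scheme for
the Allen–Cahn equation has a unique single-step solution when the step size
`τ = b − a` satisfies `τ < ε/L`, `f` being Lipschitz with constant `L`. -/
theorem eset_implicit_step_wellposed (M N : ℕ) (hM : 1 ≤ M) (hN : 1 ≤ N)
    (ε L : ℝ) (hε : 0 < ε) (hL : 0 < L) (a b : ℝ) (hab : a < b)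
    (hτ : b - a < ε / L)
    (f : ℝ → ℝ) (hf : ∀ x y : ℝ, |f x - f y| ≤ L * |x - y|)
    (u₀ : Polynomial ℝ) (hu₀deg : u₀.natDegree ≤ M)
    (hu₀m : u₀.eval (-1 : ℝ) = 0) (hu₀p : u₀.eval (1 : ℝ) = 0) :
    ∃! h : ℝ → ℝ → ℝ, MemV M N h ∧
      (∀ x ∈ Set.Icc (-1 : ℝ) 1, h x a = u₀.eval x) ∧
      ∀ w : ℝ → ℝ → ℝ, MemW M N w →
        (∫ t in a..b, ∫ x in (-1 : ℝ)..1,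
          (ptd h x t * w x t + ε * pxd h x t * pxd w x t +
            (1 / ε) * f (h x t) * w x t)) = 0 := by
  have hlip := lipschitzWith_one_div_mul hε hf
  let F : C(ℝ, ℝ) := ⟨fun u ↦ 1 / ε * f u, hlip.continuous⟩
  have hcontr : (L / ε).toNNReal * (b - a) < 1 := by
    rwa [Real.coe_toNNReal _ (by positivity), div_mul_eq_mul_div, div_lt_one hε, ← lt_div_iff₀' hL]
  obtain ⟨w, hw, hunique⟩ := existsUnique_galerkin isCompact_Icc hab.le
    (ι := (dirichletSpace M (N - 1)).subtype) (D := spaceDeriv M (N - 1))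
    (eq_zero_of_esetForm_self_eq_zero hab) hε.le (F := F) hlip hcontr
    (u₀.toContinuousMap.comp .fst) (u₀.derivative.toContinuousMap.comp .fst)
  have hresidual := integral_residual_trialFn (M := M) (N := N - 1) hab.le u₀ ε F
  have htrial {h : ℝ → ℝ → ℝ} := memV_trialFn_iff (a := a) (h := h) hu₀deg hu₀m hu₀p hN
  obtain ⟨hV, hinit⟩ := htrial.2 ⟨w, rfl⟩
  refine ⟨_, ⟨hV, hinit, fun v hvW ↦ ?_⟩, ?_⟩
  · obtain ⟨v, hv, rfl⟩ := memV_iff.1 hvW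
    exact (hresidual w ⟨v, hv⟩).trans (hw ⟨v, hv⟩)
  · rintro h ⟨hV, hinit, hscheme⟩
    obtain ⟨w', rfl⟩ := htrial.1 ⟨hV, hinit⟩
    rw [hunique w' fun v ↦ (hresidual w' v).symm.trans (hscheme _ (memV_curry_iff.2 v.2))]
end

section
/- Fix integers M ≥ 1, N ≥ 1, reals ε > 0, L > 0 and a < b with τ := b − a, and f : ℝ → ℝ Lipschitz continuous with constant L. Let g, h₀, h₁ ∈ V_{M,N} all have the same value at t = a (g(·,a) = h₀(·,a) = h₁(·,a)), and suppose h₀ solves the linearized step with source f(g) and h₁ solves the linearized step with source f(h₀); that is, for j = 0, 1: ∫_a^b ∫₋₁¹ [∂_t h_j·w + ε ∂_x h_j·∂_x w + (1/ε) f(p_j)·w] dx dt = 0 for every w ∈ W_{M,N−1}, where p₀ = g and p₁ = h₀. Then, with d := h₁ − h₀ and d' := h₀ − g, ∫_a^b ∫₋₁¹ (∂_t d)² dx dt + ε ∫₋₁¹ (∂_x d(x,b))² dx ≤ (L²τ²/ε²) ∫_a^b ∫₋₁¹ (∂_t d')² dx dt. -/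
/-!
The difference `u = h₁ − h₀` solves `∂ₜu − ε ∂ₓ²u + s = 0` weakly, with
`s = ε⁻¹ (f(h₀) − f(g))`. Testing with `∂ₜu`, which lies in the test space, turns the diffusion term
into `(ε / 2) ∬ ∂ₜ((∂ₓu)²)`, so by Young's inequality
`∬ (∂ₜu)² + ε ∫ (∂ₓu(·,b))² ≤ ∬ s² ≤ (L / ε)² ∬ (h₀ − g)²`. Since `h₀ − g` vanishes at `t = a`, the
Poincaré inequality in time bounds the right-hand side by `(L τ / ε)² ∬ (∂ₜ(h₀ − g))²`.
-/

open MeasureTheory intervalIntegral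

section Calculus

lemma sq_integral_le_mul_integral_sq_s12 {f : ℝ → ℝ} {a b : ℝ} (hab : a ≤ b)
    (hf : IntervalIntegrable f volume a b)
    (hf_sq : IntervalIntegrable (fun t => f t ^ 2) volume a b) :
    (∫ t in a..b, f t) ^ 2 ≤ (b - a) * ∫ t in a..b, f t ^ 2 := by
  rcases hab.eq_or_lt with rfl | hlt
  · simp
  have hjensen : (⨍ t in a..b, f t) ^ 2 ≤ ⨍ t in a..b, f t ^ 2 := by
    rw [Set.uIoc_of_le hab]
    exact even_two.convexOn_pow.map_set_average_le (continuous_pow 2).continuousOn isClosed_univ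
      (by simp [hlt]) (by simp) (by simp) hf.1 hf_sq.1
  rw [interval_average_eq_div, interval_average_eq_div, div_pow] at hjensen
  have hpos : 0 < b - a := sub_pos.2 hlt
  field_simp at hjensen
  linarith

lemma integral_sq_le_sq_mul_integral_deriv_sq {φ ψ : ℝ → ℝ} {a b : ℝ} (hab : a ≤ b)
    (hφ : ∀ t ∈ Set.Icc a b, HasDerivAt φ (ψ t) t) (hψ : ContinuousOn ψ (Set.Icc a b))
    (hφa : φ a = 0) :
    ∫ t in a..b, φ t ^ 2 ≤ (b - a) ^ 2 * ∫ t in a..b, ψ t ^ 2 := by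
  have hφ_cont : ContinuousOn φ (Set.Icc a b) := fun t ht =>
    (hφ t ht).continuousAt.continuousWithinAt
  have hψ_sq_int : IntervalIntegrable (fun t => ψ t ^ 2) volume a b :=
    (hψ.pow 2).intervalIntegrable_of_Icc hab
  have hpointwise : ∀ t ∈ Set.Icc a b, φ t ^ 2 ≤ (b - a) * ∫ s in a..b, ψ s ^ 2 := by
    intro t ht
    have hsub : Set.Icc a t ⊆ Set.Icc a b := Set.Icc_subset_Icc_right ht.2
    have hψ_int : IntervalIntegrable ψ volume a t :=
      (hψ.mono hsub).intervalIntegrable_of_Icc ht.1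
    have hftc : ∫ s in a..t, ψ s = φ t := by
      rw [integral_eq_sub_of_hasDerivAt
        (fun s hs => hφ s (hsub (Set.uIcc_of_le ht.1 ▸ hs))) hψ_int, hφa, sub_zero]
    calc φ t ^ 2 = (∫ s in a..t, ψ s) ^ 2 := by rw [hftc]
      _ ≤ (t - a) * ∫ s in a..t, ψ s ^ 2 :=
        sq_integral_le_mul_integral_sq_s12 ht.1 hψ_int
          (((hψ.mono hsub).pow 2).intervalIntegrable_of_Icc ht.1)
      _ ≤ (b - a) * ∫ s in a..b, ψ s ^ 2 :=
        mul_le_mul (sub_le_sub_right ht.2 a)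
          (integral_mono_interval le_rfl ht.1 ht.2 (ae_of_all _ fun s => sq_nonneg (ψ s))
            hψ_sq_int)
          (integral_nonneg ht.1 fun s _ => sq_nonneg (ψ s)) (sub_nonneg.2 hab)
  calc ∫ t in a..b, φ t ^ 2 ≤ ∫ _ in a..b, (b - a) * ∫ s in a..b, ψ s ^ 2 :=
        integral_mono_on hab ((hφ_cont.pow 2).intervalIntegrable_of_Icc hab)
          intervalIntegrable_const hpointwise
    _ = (b - a) ^ 2 * ∫ t in a..b, ψ t ^ 2 := by
        rw [intervalIntegral.integral_const, smul_eq_mul]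
        ring

end Calculus

section IteratedIntegrals

variable {F G : ℝ → ℝ → ℝ} {a b c d : ℝ}

lemma intervalIntegral_swap_of_continuous (hF : Continuous ↿F) :
    ∫ t in a..b, ∫ x in c..d, F x t = ∫ x in c..d, ∫ t in a..b, F x t := by
  refine intervalIntegral_intervalIntegral_swap ?_
  exact ((hF.comp continuous_swap).continuousOn.integrableOn_compact
    (isCompact_uIcc.prod isCompact_uIcc)).mono_set
      (Set.prod_mono Set.uIoc_subset_uIcc Set.uIoc_subset_uIcc)

lemma continuous_intervalIntegral_left (hF : Continuous ↿F) :
    Continuous fun t => ∫ x in c..d, F x t :=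
  continuous_parametric_intervalIntegral_of_continuous' (f := fun t x => F x t)
    (hF.comp continuous_swap) c d

lemma intervalIntegral_intervalIntegral_add (hF : Continuous ↿F) (hG : Continuous ↿G) :
    ∫ t in a..b, ∫ x in c..d, (F x t + G x t) =
      (∫ t in a..b, ∫ x in c..d, F x t) + ∫ t in a..b, ∫ x in c..d, G x t := by
  rw [← integral_add ((continuous_intervalIntegral_left hF).intervalIntegrable _ _)
    ((continuous_intervalIntegral_left hG).intervalIntegrable _ _)]
  congr 1 with t
  exact integral_add ((hF.comp (.prodMk_left t)).intervalIntegrable _ _)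
    ((hG.comp (.prodMk_left t)).intervalIntegrable _ _)

lemma intervalIntegral_intervalIntegral_mono (hF : Continuous ↿F) (hG : Continuous ↿G)
    (hab : a ≤ b) (hcd : c ≤ d) (hFG : ∀ x t, F x t ≤ G x t) :
    ∫ t in a..b, ∫ x in c..d, F x t ≤ ∫ t in a..b, ∫ x in c..d, G x t :=
  integral_mono hab ((continuous_intervalIntegral_left hF).intervalIntegrable _ _)
    ((continuous_intervalIntegral_left hG).intervalIntegrable _ _) fun t =>
      integral_mono hcd ((hF.comp (.prodMk_left t)).intervalIntegrable _ _)
        ((hG.comp (.prodMk_left t)).intervalIntegrable _ _) fun x => hFG x t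

end IteratedIntegrals

section PartialDerivatives

variable {h k : ℝ → ℝ → ℝ}

lemma hasDerivAt_fderiv_snd (hh : Differentiable ℝ ↿h) (x t : ℝ) :
    HasDerivAt (fun s => h x s) (fderiv ℝ ↿h (x, t) (0, 1)) t :=
  (hh (x, t)).hasFDerivAt.comp_hasDerivAt (f := fun s => (x, s)) t
    ((hasDerivAt_const t x).prodMk (hasDerivAt_id' t))

lemma hasDerivAt_fderiv_fst (hh : Differentiable ℝ ↿h) (x t : ℝ) :
    HasDerivAt (fun y => h y t) (fderiv ℝ ↿h (x, t) (1, 0)) x :=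
  (hh (x, t)).hasFDerivAt.comp_hasDerivAt (f := fun y => (y, t)) x
    ((hasDerivAt_id' x).prodMk (hasDerivAt_const x t))

lemma ptd_eq_fderiv (hh : Differentiable ℝ ↿h) : ptd h = fun x t => fderiv ℝ ↿h (x, t) (0, 1) :=
  funext₂ fun x t => (hasDerivAt_fderiv_snd hh x t).deriv

lemma pxd_eq_fderiv (hh : Differentiable ℝ ↿h) : pxd h = fun x t => fderiv ℝ ↿h (x, t) (1, 0) :=
  funext₂ fun x t => (hasDerivAt_fderiv_fst hh x t).deriv

lemma hasDerivAt_ptd (hh : Differentiable ℝ ↿h) (x t : ℝ) :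
    HasDerivAt (fun s => h x s) (ptd h x t) t :=
  (hasDerivAt_fderiv_snd hh x t).differentiableAt.hasDerivAt

lemma hasDerivAt_pxd_s12 (hh : Differentiable ℝ ↿h) (x t : ℝ) :
    HasDerivAt (fun y => h y t) (pxd h x t) x :=
  (hasDerivAt_fderiv_fst hh x t).differentiableAt.hasDerivAt

lemma ptd_sub (hh : Differentiable ℝ ↿h) (hk : Differentiable ℝ ↿k) (x t : ℝ) :
    ptd (h - k) x t = ptd h x t - ptd k x t :=
  ((hasDerivAt_ptd hh x t).sub (hasDerivAt_ptd hk x t)).deriv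

lemma pxd_sub (hh : Differentiable ℝ ↿h) (hk : Differentiable ℝ ↿k) (x t : ℝ) :
    pxd (h - k) x t = pxd h x t - pxd k x t :=
  ((hasDerivAt_pxd_s12 hh x t).sub (hasDerivAt_pxd_s12 hk x t)).deriv

lemma contDiff_ptd {m n : WithTop ℕ∞} (hh : ContDiff ℝ n ↿h) (hmn : m + 1 ≤ n) :
    ContDiff ℝ m ↿(ptd h) := by
  rw [ptd_eq_fderiv ((hh.of_le (le_add_self.trans hmn)).differentiable one_ne_zero)]
  exact (hh.fderiv_right hmn).clm_apply contDiff_const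

lemma contDiff_pxd {m n : WithTop ℕ∞} (hh : ContDiff ℝ n ↿h) (hmn : m + 1 ≤ n) :
    ContDiff ℝ m ↿(pxd h) := by
  rw [pxd_eq_fderiv ((hh.of_le (le_add_self.trans hmn)).differentiable one_ne_zero)]
  exact (hh.fderiv_right hmn).clm_apply contDiff_const

lemma continuous_ptd (hh : ContDiff ℝ 1 ↿h) : Continuous ↿(ptd h) :=
  (contDiff_ptd hh (zero_add 1).le).continuous

lemma continuous_pxd (hh : ContDiff ℝ 1 ↿h) : Continuous ↿(pxd h) :=
  (contDiff_pxd hh (zero_add 1).le).continuous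

lemma ptd_pxd_comm (hh : ContDiff ℝ 2 ↿h) : ptd (pxd h) = pxd (ptd h) := by
  have hdiff : Differentiable ℝ ↿h := hh.differentiable two_ne_zero
  have hderiv : Differentiable ℝ (fderiv ℝ ↿h) :=
    (hh.fderiv_right (m := 1) le_rfl).differentiable one_ne_zero
  have hsnd (v w p : ℝ × ℝ) :
      fderiv ℝ (fun q => fderiv ℝ ↿h q v) p w = fderiv ℝ (fderiv ℝ ↿h) p w v := by
    simp [fderiv_clm_apply (hderiv p) (differentiableAt_const v)]
  ext x t
  calc ptd (pxd h) x t = fderiv ℝ (fderiv ℝ ↿h) (x, t) (0, 1) (1, 0) := by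
        rw [pxd_eq_fderiv hdiff, ptd_eq_fderiv (hderiv.clm_apply (differentiable_const _))]
        exact hsnd _ _ _
    _ = fderiv ℝ (fderiv ℝ ↿h) (x, t) (1, 0) (0, 1) :=
        (hh.contDiffAt.isSymmSndFDerivAt (by simp)).eq _ _
    _ = pxd (ptd h) x t := by
        rw [ptd_eq_fderiv hdiff, pxd_eq_fderiv (hderiv.clm_apply (differentiable_const _))]
        exact (hsnd _ _ _).symm

end PartialDerivatives

section Polynomials

variable {M N : ℕ} {h k : ℝ → ℝ → ℝ}

lemma IsPolyMN.sub (hh : IsPolyMN M N h) (hk : IsPolyMN M N k) : IsPolyMN M N (h - k) := by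
  obtain ⟨c, hc⟩ := hh
  obtain ⟨e, he⟩ := hk
  refine ⟨c - e, fun x t => ?_⟩
  simp only [Pi.sub_apply, hc, he, sub_mul, Finset.sum_sub_distrib]

lemma IsPolyMN.contDiff (hh : IsPolyMN M N h) {n : WithTop ℕ∞} : ContDiff ℝ n ↿h := by
  obtain ⟨c, hc⟩ := hh
  obtain rfl : h = _ := funext₂ hc
  unfold Function.HasUncurry.uncurry
  fun_prop

lemma IsPolyMN.isPolyMN_ptd (hh : IsPolyMN M N h) : IsPolyMN M (N - 1) (ptd h) := by
  obtain ⟨c, hc⟩ := hh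
  have hptd : ∀ x t, ptd h x t = ∑ i : Fin (M + 1), ∑ j : Fin (N + 1),
      c i j * x ^ (i : ℕ) * (j * t ^ ((j : ℕ) - 1)) := fun x t => by
    simp only [ptd, hc]
    exact (HasDerivAt.fun_sum fun (i : Fin (M + 1)) _ => HasDerivAt.fun_sum
      fun (j : Fin (N + 1)) _ => (hasDerivAt_pow j t).const_mul (c i j * x ^ (i : ℕ))).deriv
  obtain _ | n := N
  · exact ⟨0, fun x t => by simp [hptd]⟩
  · refine ⟨fun i j => c i j.succ * (j + 1), fun x t => ?_⟩
    simp only [hptd, Fin.sum_univ_succ (n := n + 1), Fin.val_zero, Nat.cast_zero, zero_mul,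
      mul_zero, zero_add, Fin.val_succ, Nat.add_sub_cancel, Nat.cast_add, Nat.cast_one]
    exact Finset.sum_congr rfl fun i _ => Finset.sum_congr rfl fun j _ => by ring

lemma MemV.memW_ptd (hh : MemV M N h) : MemW M N (ptd h) := by
  refine ⟨hh.1.isPolyMN_ptd, fun t => ⟨?_, ?_⟩⟩ <;> simp [ptd, hh.2]

lemma MemV.sub (hh : MemV M N h) (hk : MemV M N k) : MemV M N (h - k) :=
  ⟨hh.1.sub hk.1, fun t => by simp [hh.2, hk.2]⟩

end Polynomials

section WeakFormulation

/-- The residual of the weak form of `∂ₜh − ε ∂ₓ²h + s = 0` on `(c, d) × (a, b)`, tested against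
`w`. The boundary term of the integration by parts in `x` is dropped, so this is the weak form for
test functions vanishing at `x = c` and `x = d`. -/
noncomputable def weakResidual (ε a b c d : ℝ) (s h w : ℝ → ℝ → ℝ) : ℝ :=
  ∫ t in a..b, ∫ x in c..d, (ptd h x t * w x t + ε * pxd h x t * pxd w x t + s x t * w x t)

variable {ε a b c d : ℝ} {s s₀ s₁ h₀ h₁ w u : ℝ → ℝ → ℝ}

lemma weakResidual_sub (hs₀ : Continuous ↿s₀) (hs₁ : Continuous ↿s₁)
    (hh₀ : ContDiff ℝ 1 ↿h₀) (hh₁ : ContDiff ℝ 1 ↿h₁) (hw : ContDiff ℝ 1 ↿w) :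
    weakResidual ε a b c d (s₁ - s₀) (h₁ - h₀) w =
      weakResidual ε a b c d s₁ h₁ w - weakResidual ε a b c d s₀ h₀ w := by
  have hdiff₀ := hh₀.differentiable one_ne_zero
  have hdiff₁ := hh₁.differentiable one_ne_zero
  have hptd₀ := continuous_ptd hh₀
  have hptd₁ := continuous_ptd hh₁
  have hpxd₀ := continuous_pxd hh₀
  have hpxd₁ := continuous_pxd hh₁
  have hw_cont := hw.continuous
  have hpxd_w := continuous_pxd hw
  simp only [weakResidual, ptd_sub hdiff₁ hdiff₀, pxd_sub hdiff₁ hdiff₀, Pi.sub_apply]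
  rw [eq_sub_iff_add_eq, ← intervalIntegral_intervalIntegral_add (by fun_prop) (by fun_prop)]
  congr! 4 with t x
  ring

lemma integral_two_mul_pxd_mul_pxd_ptd (hu : ContDiff ℝ 2 ↿u) :
    ∫ t in a..b, ∫ x in c..d, 2 * pxd u x t * pxd (ptd u) x t =
      ∫ x in c..d, (pxd u x b ^ 2 - pxd u x a ^ 2) := by
  have hpxd : Differentiable ℝ ↿(pxd u) :=
    (contDiff_pxd hu one_add_one_eq_two.le).differentiable one_ne_zero
  have hpxd_ptd : Continuous ↿(pxd (ptd u)) :=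
    continuous_pxd (contDiff_ptd hu one_add_one_eq_two.le)
  have hcont : Continuous ↿(fun x t => 2 * pxd u x t * pxd (ptd u) x t) :=
    (hpxd.continuous.const_mul 2).mul hpxd_ptd
  rw [intervalIntegral_swap_of_continuous hcont]
  congr! 2 with x
  have hderiv (t : ℝ) :
      HasDerivAt (fun s => pxd u x s ^ 2) (2 * pxd u x t * pxd (ptd u) x t) t := by
    simpa [ptd_pxd_comm hu] using (hasDerivAt_ptd hpxd x t).fun_pow 2
  exact integral_eq_sub_of_hasDerivAt (fun t _ => hderiv t)
    ((hcont.comp (.prodMk_right x)).intervalIntegrable _ _)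

lemma energy_le_of_weakResidual_eq_zero (hab : a ≤ b) (hcd : c ≤ d) (hs : Continuous ↿s)
    (hu : ContDiff ℝ 2 ↿u) (hua : ∀ x, u x a = 0) (hweak : weakResidual ε a b c d s u (ptd u) = 0) :
    (∫ t in a..b, ∫ x in c..d, ptd u x t ^ 2) + ε * ∫ x in c..d, pxd u x b ^ 2 ≤
      ∫ t in a..b, ∫ x in c..d, s x t ^ 2 := by
  have hptd : Continuous ↿(ptd u) := (contDiff_ptd hu one_add_one_eq_two.le).continuous
  have hpxd : Continuous ↿(pxd u) := (contDiff_pxd hu one_add_one_eq_two.le).continuous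
  have hpxd_ptd : Continuous ↿(pxd (ptd u)) :=
    continuous_pxd (contDiff_ptd hu one_add_one_eq_two.le)
  have hpxd_a (x : ℝ) : pxd u x a = 0 := by simp [pxd, hua]
  have hyoung : ∀ x t, ptd u x t ^ 2 + ε * (2 * pxd u x t * pxd (ptd u) x t) ≤
      2 * (ptd u x t * ptd u x t + ε * pxd u x t * pxd (ptd u) x t + s x t * ptd u x t) +
        s x t ^ 2 := fun x t => by
    linarith [sq_nonneg (ptd u x t + s x t)]
  have hint := intervalIntegral_intervalIntegral_mono (by fun_prop) (by fun_prop) hab hcd hyoung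
  rw [intervalIntegral_intervalIntegral_add (by fun_prop) (by fun_prop),
    intervalIntegral_intervalIntegral_add (by fun_prop) (by fun_prop)] at hint
  simp only [intervalIntegral.integral_const_mul, integral_two_mul_pxd_mul_pxd_ptd hu, hpxd_a,
    ne_eq, two_ne_zero, not_false_eq_true, zero_pow, sub_zero] at hint
  rw [weakResidual] at hweak
  rwa [hweak, mul_zero, zero_add] at hint

lemma integral_sq_le_sq_mul_integral_ptd_sq (hab : a ≤ b) (hcd : c ≤ d) (hu : ContDiff ℝ 1 ↿u)
    (hua : ∀ x, u x a = 0) :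
    ∫ t in a..b, ∫ x in c..d, u x t ^ 2 ≤
      (b - a) ^ 2 * ∫ t in a..b, ∫ x in c..d, ptd u x t ^ 2 := by
  have hu_cont := hu.continuous
  have hptd := continuous_ptd hu
  have hslice (x : ℝ) : ∫ t in a..b, u x t ^ 2 ≤ (b - a) ^ 2 * ∫ t in a..b, ptd u x t ^ 2 :=
    integral_sq_le_sq_mul_integral_deriv_sq hab
      (fun t _ => hasDerivAt_ptd (hu.differentiable one_ne_zero) x t)
      (hptd.comp (.prodMk_right x)).continuousOn (hua x)
  calc ∫ t in a..b, ∫ x in c..d, u x t ^ 2 = ∫ x in c..d, ∫ t in a..b, u x t ^ 2 :=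
        intervalIntegral_swap_of_continuous (by fun_prop)
    _ ≤ ∫ x in c..d, (b - a) ^ 2 * ∫ t in a..b, ptd u x t ^ 2 :=
        intervalIntegral.integral_mono hcd (Continuous.intervalIntegrable (by fun_prop) _ _)
          (Continuous.intervalIntegrable (by fun_prop) _ _) hslice
    _ = (b - a) ^ 2 * ∫ t in a..b, ∫ x in c..d, ptd u x t ^ 2 := by
        rw [intervalIntegral.integral_const_mul,
          intervalIntegral_swap_of_continuous (F := fun x t => ptd u x t ^ 2) (by fun_prop)]

lemma integral_sq_sub_le_of_lipschitz {f : ℝ → ℝ} {L : ℝ}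
    (hf : ∀ x y, |f x - f y| ≤ L * |x - y|) {h k : ℝ → ℝ → ℝ} (hh : Continuous ↿h)
    (hk : Continuous ↿k) (hab : a ≤ b) (hcd : c ≤ d) (κ : ℝ) :
    ∫ t in a..b, ∫ x in c..d, (κ * f (h x t) - κ * f (k x t)) ^ 2 ≤
      (κ * L) ^ 2 * ∫ t in a..b, ∫ x in c..d, (h x t - k x t) ^ 2 := by
  have hf_cont : Continuous f := (LipschitzWith.of_dist_le' hf).continuous
  simp only [← intervalIntegral.integral_const_mul]
  refine intervalIntegral_intervalIntegral_mono (by fun_prop) (by fun_prop) hab hcd fun x t => ?_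
  calc (κ * f (h x t) - κ * f (k x t)) ^ 2 = κ ^ 2 * |f (h x t) - f (k x t)| ^ 2 := by
        rw [sq_abs]; ring
    _ ≤ κ ^ 2 * (L * |h x t - k x t|) ^ 2 := by gcongr; exact hf _ _
    _ = (κ * L) ^ 2 * (h x t - k x t) ^ 2 := by rw [mul_pow L, sq_abs]; ring

/-- The source term is `κ f(p)`, with `κ = 1 / ε` in the ESET scheme. -/
theorem eset_iteration_contraction_general {κ L : ℝ} {f : ℝ → ℝ}
    (hf : ∀ x y, |f x - f y| ≤ L * |x - y|) (hab : a ≤ b) (hcd : c ≤ d) {g : ℝ → ℝ → ℝ}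
    (hg : ContDiff ℝ 1 ↿g) (hh₀ : ContDiff ℝ 2 ↿h₀) (hh₁ : ContDiff ℝ 2 ↿h₁)
    (hinit : ∀ x, g x a = h₀ x a ∧ h₀ x a = h₁ x a)
    (hstep0 : weakResidual ε a b c d (fun x t => κ * f (g x t)) h₀ (ptd (h₁ - h₀)) = 0)
    (hstep1 : weakResidual ε a b c d (fun x t => κ * f (h₀ x t)) h₁ (ptd (h₁ - h₀)) = 0) :
    (∫ t in a..b, ∫ x in c..d, ptd (h₁ - h₀) x t ^ 2) +
        ε * ∫ x in c..d, pxd (h₁ - h₀) x b ^ 2 ≤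
      (κ * L * (b - a)) ^ 2 * ∫ t in a..b, ∫ x in c..d, ptd (h₀ - g) x t ^ 2 := by
  have hf_cont : Continuous f := (LipschitzWith.of_dist_le' hf).continuous
  have hg_cont := hg.continuous
  have hh₀_cont := hh₀.continuous
  have hh₀_C1 : ContDiff ℝ 1 ↿h₀ := hh₀.of_le one_le_two
  have hu : ContDiff ℝ 2 ↿(h₁ - h₀) := hh₁.sub hh₀
  have hweak : weakResidual ε a b c d ((fun x t => κ * f (h₀ x t)) - fun x t => κ * f (g x t))
      (h₁ - h₀) (ptd (h₁ - h₀)) = 0 := by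
    rw [weakResidual_sub (by fun_prop) (by fun_prop) hh₀_C1 (hh₁.of_le one_le_two)
      (contDiff_ptd hu one_add_one_eq_two.le), hstep0, hstep1, sub_zero]
  calc (∫ t in a..b, ∫ x in c..d, ptd (h₁ - h₀) x t ^ 2) +
        ε * ∫ x in c..d, pxd (h₁ - h₀) x b ^ 2
      ≤ ∫ t in a..b, ∫ x in c..d, (κ * f (h₀ x t) - κ * f (g x t)) ^ 2 :=
        energy_le_of_weakResidual_eq_zero hab hcd (Continuous.sub (by fun_prop) (by fun_prop)) hu
          (fun x => sub_eq_zero.2 (hinit x).2.symm) hweak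
    _ ≤ (κ * L) ^ 2 * ∫ t in a..b, ∫ x in c..d, (h₀ x t - g x t) ^ 2 :=
        integral_sq_sub_le_of_lipschitz hf hh₀_cont hg_cont hab hcd κ
    _ ≤ (κ * L) ^ 2 * ((b - a) ^ 2 * ∫ t in a..b, ∫ x in c..d, ptd (h₀ - g) x t ^ 2) := by
        gcongr
        exact integral_sq_le_sq_mul_integral_ptd_sq hab hcd (hh₀_C1.sub hg)
          fun x => sub_eq_zero.2 (hinit x).1.symm
    _ = (κ * L * (b - a)) ^ 2 * ∫ t in a..b, ∫ x in c..d, ptd (h₀ - g) x t ^ 2 := by ring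

end WeakFormulation

/-- The contraction estimate of Section 4.1: one sweep of the semi-implicit
iteration used to solve the implicit ESET scheme contracts with rate
`L²τ²/ε²`.  Here `h₀` solves the linearized step with frozen source `f(g)`
and `h₁` the one with frozen source `f(h₀)`; `d = h₁ − h₀`, `d' = h₀ − g`. -/
theorem eset_iteration_contraction (M N : ℕ) (hM : 1 ≤ M) (hN : 1 ≤ N)
    (ε L : ℝ) (hε : 0 < ε) (hL : 0 < L) (a b : ℝ) (hab : a < b)
    (f : ℝ → ℝ) (hf : ∀ x y : ℝ, |f x - f y| ≤ L * |x - y|)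
    (g h₀ h₁ : ℝ → ℝ → ℝ)
    (hgmem : MemV M N g) (h₀mem : MemV M N h₀) (h₁mem : MemV M N h₁)
    (hinit : ∀ x : ℝ, g x a = h₀ x a ∧ h₀ x a = h₁ x a)
    (hstep0 : ∀ w : ℝ → ℝ → ℝ, MemW M N w →
      (∫ t in a..b, ∫ x in (-1 : ℝ)..1,
        (ptd h₀ x t * w x t + ε * pxd h₀ x t * pxd w x t +
          (1 / ε) * f (g x t) * w x t)) = 0)
    (hstep1 : ∀ w : ℝ → ℝ → ℝ, MemW M N w →
      (∫ t in a..b, ∫ x in (-1 : ℝ)..1,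
        (ptd h₁ x t * w x t + ε * pxd h₁ x t * pxd w x t +
          (1 / ε) * f (h₀ x t) * w x t)) = 0) :
    (∫ t in a..b, ∫ x in (-1 : ℝ)..1,
        (deriv (fun s => h₁ x s - h₀ x s) t) ^ 2) +
      ε * ∫ x in (-1 : ℝ)..1, (deriv (fun y => h₁ y b - h₀ y b) x) ^ 2 ≤
    (L ^ 2 * (b - a) ^ 2 / ε ^ 2) *
      ∫ t in a..b, ∫ x in (-1 : ℝ)..1,
        (deriv (fun s => h₀ x s - g x s) t) ^ 2 := by
  have hw : MemW M N (ptd (h₁ - h₀)) := (h₁mem.sub h₀mem).memW_ptd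
  exact (eset_iteration_contraction_general hf hab.le (by norm_num) hgmem.1.contDiff
    h₀mem.1.contDiff h₁mem.1.contDiff hinit (hstep0 _ hw) (hstep1 _ hw)).trans_eq (by
      simp only [ptd, Pi.sub_apply]; ring)
end
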